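/- Let d ≥ 5 and let U be an n-element configuration in Z^d. There is a real number a = a(d,n) such that if C = (C^1, C^2) is a clustering of U with |C^1| ≤ 3 and sep(C) ≥ a, then H_U(x) ≥ 1/(2n) for every x ∈ C^1. Moreover, regardless of the separation of C, if |C^1| ≤ 3 then H_C(1,x) ≥ 1/(2n) for every x ∈ C^1. -/

import Mathlib

open MeasureTheory

namespace HATFormal

/-- Points of the lattice `ℤ^d`. -/
abbrev Pt (d : ℕ) := Fin d → ℤ

/-- The `2d` unit steps of the simple random walk on `ℤ^d`. -/
def Dir (d : ℕ) : Set (Pt d) :=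
  {s | ∃ i : Fin d, s = Pi.single i 1 ∨ s = Pi.single i (-1)}

/-- The position, after `t` steps, of the walk started at `x` with steps `s`. -/
def wpos (d : ℕ) (x : Pt d) {T : ℕ} (s : Fin T → Pt d) (t : ℕ) : Pt d :=
  x + ∑ i ∈ Finset.univ.filter (fun i : Fin T => (i : ℕ) < t), s i

/-- The probability of an event `P` of the first `T` steps of simple random walk on `ℤ^d`. -/
noncomputable def prob (d T : ℕ) (P : (Fin T → Pt d) → Prop) : ℝ :=
  (Nat.card {s : Fin T → Pt d // (∀ i, s i ∈ Dir d) ∧ P s} : ℝ) / ((2 * d : ℕ) : ℝ) ^ T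

open Classical in
/-- `esc d A x = P_x(τ_A = ∞)` if `x ∈ A`, and `0` otherwise. -/
noncomputable def esc (d : ℕ) (A : Set (Pt d)) (x : Pt d) : ℝ :=
  if x ∈ A then ⨅ T : ℕ, prob d T (fun s => ∀ t, 1 ≤ t → t ≤ T → wpos d x s t ∉ A) else 0

/-- The capacity of `A`. -/
noncomputable def capa (d : ℕ) (A : Set (Pt d)) : ℝ := ∑' x : A, esc d A (x : Pt d)

/-- The harmonic measure `H_A(x) = esc_A(x) / cap_A`. -/
noncomputable def harm (d : ℕ) (A : Set (Pt d)) (x : Pt d) : ℝ := esc d A x / capa d A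

/-- `P_x(τ_W < ∞)`. -/
noncomputable def retProb (d : ℕ) (W : Set (Pt d)) (x : Pt d) : ℝ :=
  ∑' t : ℕ, prob d t (fun s => 1 ≤ t ∧ wpos d x s t ∈ W ∧
    ∀ u, 1 ≤ u → u < t → wpos d x s u ∉ W)

/-- `P_x(τ_W < ∞ and S_{τ_W − 1} = y)`. -/
noncomputable def hitFrom (d : ℕ) (W : Set (Pt d)) (x y : Pt d) : ℝ :=
  ∑' t : ℕ, prob d t (fun s => 1 ≤ t ∧ wpos d x s t ∈ W ∧ wpos d x s (t - 1) = y ∧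
    ∀ u, 1 ≤ u → u < t → wpos d x s u ∉ W)

/-- `P_x(τ_W < ∞ and S_{τ_W} ∈ T)`. -/
noncomputable def firstHitIn (d : ℕ) (W T : Set (Pt d)) (x : Pt d) : ℝ :=
  ∑' t : ℕ, prob d t (fun s => 1 ≤ t ∧ wpos d x s t ∈ W ∧ wpos d x s t ∈ T ∧
    ∀ u, 1 ≤ u → u < t → wpos d x s u ∉ W)

/-- `P_x(S_{τ_W − 1} = y ∣ τ_W < ∞)`. -/
noncomputable def transP (d : ℕ) (W : Set (Pt d)) (x y : Pt d) : ℝ :=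
  hitFrom d W x y / retProb d W x

/-- The Green's function of simple random walk on `ℤ^d`. -/
noncomputable def green (d : ℕ) (x : Pt d) : ℝ :=
  ∑' t : ℕ, prob d t (fun s => wpos d x s t = 0)

/-- Configurations: finite subsets of `ℤ^d`. -/
abbrev Conf (d : ℕ) := Finset (Pt d)

/-- `p_U(x, y)`, the probability that HAT activates at `x` and transports to `y`. -/
noncomputable def pHAT (d : ℕ) (U : Conf d) (x y : Pt d) : ℝ :=
  harm d (↑U) x * transP d ((↑U : Set (Pt d)) \ {x}) x y

open Classical in
/-- The transition probabilities of HAT. -/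
noncomputable def hatProb (d : ℕ) (U V : Conf d) : ℝ :=
  if V = U then ∑' z : Pt d, pHAT d U z z
  else ∑' x : Pt d, ∑' y : Pt d,
    if x ∈ U ∧ x ≠ y ∧ V = insert y (U.erase x) then pHAT d U x y else 0

instance (d : ℕ) : MeasurableSpace (Conf d) := ⊤

/-- `μ` is the law of HAT started from `U`. -/
def IsHATLaw (d : ℕ) (U : Conf d) (μ : Measure (ℕ → Conf d)) : Prop :=
  IsProbabilityMeasure μ ∧
  ∀ (t : ℕ) (u : ℕ → Conf d),
    μ {ω | ∀ s ≤ t, ω s = u s} =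
      (if u 0 = U then 1 else 0) *
        ∏ s ∈ Finset.range t, ENNReal.ofReal (hatProb d (u s) (u (s + 1)))

/-- A signed permutation plus translation of `ℤ^d`. -/
def SymImage (d : ℕ) (σ : Equiv.Perm (Fin d)) (ε : Fin d → ℤ) (v : Pt d) (x : Pt d) : Pt d :=
  fun i => v i + ε i * x (σ i)

/-- `SymEq d U V` holds when `V = gU` for a symmetry `g` of `ℤ^d`. -/
def SymEq (d : ℕ) (U V : Conf d) : Prop :=
  ∃ (σ : Equiv.Perm (Fin d)) (ε : Fin d → ℤ) (v : Pt d),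
    (∀ i, ε i = 1 ∨ ε i = -1) ∧ V = U.image (SymImage d σ ε v)

/-- Euclidean distance on `ℤ^d`. -/
noncomputable def dist0 (d : ℕ) (x y : Pt d) : ℝ :=
  Real.sqrt (∑ i, ((x i : ℝ) - (y i : ℝ)) ^ 2)

/-- Euclidean distance between finite subsets of `ℤ^d`. -/
noncomputable def setDist (d : ℕ) (A B : Finset (Pt d)) : ℝ :=
  sInf {r : ℝ | ∃ x ∈ A, ∃ y ∈ B, r = dist0 d x y}

/-- Euclidean diameter of a finite subset of `ℤ^d`. -/
noncomputable def diam0 (d : ℕ) (A : Finset (Pt d)) : ℝ :=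
  sSup {r : ℝ | ∃ x ∈ A, ∃ y ∈ A, r = dist0 d x y}

/-- Lattice (nearest-neighbor) adjacency in `ℤ^d`. -/
def latAdj (d : ℕ) (x y : Pt d) : Prop := (∑ i, (x i - y i).natAbs) = 1

/-- Exterior lattice boundary of a set. -/
def bdry (d : ℕ) (A : Set (Pt d)) : Set (Pt d) := {z | z ∉ A ∧ ∃ w ∈ A, latAdj d z w}

/-- Non-isolated configurations: some exposed element has a lattice neighbor in the set. -/
def NonIso (d : ℕ) (U : Conf d) : Prop :=
  ∃ x ∈ U, 0 < esc d (↑U) x ∧ ∃ y ∈ U, latAdj d x y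

/-- `C` is a clustering (ordered partition into nonempty clusters) of `U`. -/
def IsClusteringOf (d : ℕ) {k : ℕ} (C : Fin k → Finset (Pt d)) (U : Finset (Pt d)) : Prop :=
  (∀ i, (C i).Nonempty) ∧ (∀ i j, i ≠ j → Disjoint (C i) (C j)) ∧
    Finset.univ.biUnion C = U

/-- `C^{≠ i}`, the union of the clusters other than `i`. -/
def others (d : ℕ) {k : ℕ} (C : Fin k → Finset (Pt d)) (i : Fin k) : Finset (Pt d) :=
  Finset.univ.biUnion fun j => if j = i then ∅ else C j

/-- The separation of a clustering. -/
noncomputable def sep (d : ℕ) {k : ℕ} (C : Fin k → Finset (Pt d)) : ℝ :=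
  ⨅ i, setDist d (C i) (others d C i)

/-- `(a, b)` separated dimer-or-trimer (DOT) clusterings. -/
def IsDOT (d : ℕ) {k : ℕ} (C : Fin k → Finset (Pt d)) (a b : ℝ) : Prop :=
  (∀ i, (C i).card = 2 ∨ (C i).card = 3) ∧ a ≤ sep d C ∧
    ∀ i, diam0 d (C i) ≤ b * Real.log (setDist d (C i) (others d C i))

/-- Clusterings with an unspecified number of clusters. -/
abbrev ClusteringS (d : ℕ) := Σ k : ℕ, Fin k → Finset (Pt d)

/-- `π(C)`, the union of the clusters of `C`. -/
def confOf (d : ℕ) (C : ClusteringS d) : Conf d := Finset.univ.biUnion C.2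

/-- `C ∈ 𝒞(U, a, b)`. -/
def InC (d : ℕ) (U : Conf d) (a b : ℝ) (C : ClusteringS d) : Prop :=
  IsClusteringOf d C.2 U ∧ IsDOT d C.2 a b

/-- `U ∈ 𝒰_{d,n}(a, b)`. -/
def InU (d n : ℕ) (a b : ℝ) (U : Conf d) : Prop :=
  U.card = n ∧ ∃ C : ClusteringS d, InC d U a b C

/-- `C` is a clustering of an `n`-element configuration. -/
def IsClusteringConf (d n : ℕ) (C : ClusteringS d) : Prop :=
  (∀ i, (C.2 i).Nonempty) ∧ (∀ i j, i ≠ j → Disjoint (C.2 i) (C.2 j)) ∧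
    (confOf d C).card = n

open Classical in
/-- One step of the natural clustering. -/
noncomputable def clustStep (d : ℕ) (Ut Ut1 : Conf d) (C : ClusteringS d) : ClusteringS d :=
  if Ut1 = Ut then C
  else if h : ∃ p : Pt d × Pt d × Fin C.1,
      Ut \ Ut1 = {p.1} ∧ Ut1 \ Ut = {p.2.1} ∧ p.1 ∈ C.2 p.2.2 then
    ⟨C.1, Function.update C.2 h.choose.2.2
      (insert h.choose.2.1 ((C.2 h.choose.2.2).erase h.choose.1))⟩
  else ⟨1, fun _ => Ut1⟩

/-- The natural clustering of the trajectory `ω` with initial clustering `C0`. -/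
noncomputable def natClust (d : ℕ) (ω : ℕ → Conf d) (C0 : ClusteringS d) : ℕ → ClusteringS d
  | 0 => C0
  | t + 1 => clustStep d (ω t) (ω (t + 1)) (natClust d ω C0 t)

/-- `a_s = s^{1/2 − n^{−100}} + 100 n`. -/
noncomputable def aSep (n s : ℕ) : ℝ :=
  (s : ℝ) ^ ((1 : ℝ) / 2 - (n : ℝ) ^ (-(100 : ℝ))) + 100 * n

/-- `C^{i, x, y}`: remove `x` from cluster `i` of `C` and add `y` to that cluster. -/
def updC (d : ℕ) (C : ClusteringS d) (i : Fin C.1) (x y : Pt d) : ClusteringS d :=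
  ⟨C.1, Function.update C.2 i (insert y ((C.2 i).erase x))⟩

open Classical in
/-- The transition probabilities of the lifting of HAT to clusterings. -/
noncomputable def liftProb (d : ℕ) (E0 E1 : ClusteringS d) : ℝ :=
  ∑' x : Pt d, ∑' y : Pt d,
    if ∃ i : Fin E0.1, x ∈ E0.2 i ∧ E1 = updC d E0 i x y
    then pHAT d (confOf d E0) x y else 0

/-- The capacity of a clustering: the sum of the capacities of its clusters. -/
noncomputable def capS (d : ℕ) (C : ClusteringS d) : ℝ := ∑ i, capa d (↑(C.2 i))

/-- `H_C(i, x) = esc_{C^i}(x) / cap_C`. -/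
noncomputable def harmS (d : ℕ) (C : ClusteringS d) (i : Fin C.1) (x : Pt d) : ℝ :=
  esc d (↑(C.2 i)) x / capS d C

/-- `q_C(i, x, y)`. -/
noncomputable def qIHAT (d : ℕ) (C : ClusteringS d) (i : Fin C.1) (x y : Pt d) : ℝ :=
  harmS d C i x * transP d ((↑(C.2 i) : Set (Pt d)) \ {x}) x y

open Classical in
/-- The transition probabilities of intracluster HAT (IHAT). -/
noncomputable def ihatProb (d : ℕ) (D E : ClusteringS d) : ℝ :=
  ∑' x : Pt d, ∑' y : Pt d, ∑ i : Fin D.1,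
    if x ∈ D.2 i ∧ E = updC d D i x y then qIHAT d D i x y else 0

instance (d : ℕ) : MeasurableSpace (ClusteringS d) := ⊤

open Classical in
/-- `μ` is the law of the lifted HAT chain started from `E0`. -/
def IsLiftLaw (d : ℕ) (E0 : ClusteringS d) (μ : Measure (ℕ → ClusteringS d)) : Prop :=
  IsProbabilityMeasure μ ∧
  ∀ (t : ℕ) (u : ℕ → ClusteringS d),
    μ {ω | ∀ s ≤ t, ω s = u s} =
      (if u 0 = E0 then 1 else 0) *
        ∏ s ∈ Finset.range t, ENNReal.ofReal (liftProb d (u s) (u (s + 1)))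

open Classical in
/-- `μ` is the law of intracluster HAT started from `D0`. -/
def IsIHATLaw (d : ℕ) (D0 : ClusteringS d) (μ : Measure (ℕ → ClusteringS d)) : Prop :=
  IsProbabilityMeasure μ ∧
  ∀ (t : ℕ) (u : ℕ → ClusteringS d),
    μ {ω | ∀ s ≤ t, ω s = u s} =
      (if u 0 = D0 then 1 else 0) *
        ∏ s ∈ Finset.range t, ENNReal.ofReal (ihatProb d (u s) (u (s + 1)))

/-- `Pairs(E0, E1)`. -/
def Pairs (d : ℕ) (E0 E1 : ClusteringS d) : Set (Pt d × Pt d) :=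
  {p | 0 < pHAT d (confOf d E0) p.1 p.2 ∧
    ∃ i : Fin E0.1, p.1 ∈ E0.2 i ∧ E1 = updC d E0 i p.1 p.2}

/-- `Triples(E0, E1)`. -/
def Triples (d : ℕ) (E0 E1 : ClusteringS d) : Set (Fin E0.1 × Pt d × Pt d) :=
  {q | 0 < qIHAT d E0 q.1 q.2.1 q.2.2 ∧ E1 = updC d E0 q.1 q.2.1 q.2.2}

/-- The first standard basis vector of `ℤ^d`. -/
def e1v (d : ℕ) : Pt d := fun i => if (i : ℕ) = 0 then 1 else 0

/-- Reference dimers and trimers. -/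
def Ref (d : ℕ) : Set (Finset (Pt d)) :=
  {A | ∃ x : Pt d, A = {x, x + e1v d} ∨ A = {x, x + e1v d, x + e1v d + e1v d}}

/-- *-adjacency in `ℤ^d`: distinct points differing by at most one in each coordinate. -/
def starAdj (d : ℕ) (x y : Pt d) : Prop := x ≠ y ∧ ∀ i, (x i - y i).natAbs ≤ 1

/-- The *-visible boundary of `A`. -/
def visBdry (d : ℕ) (A : Finset (Pt d)) : Set (Pt d) :=
  {x | (∃ y ∈ A, starAdj d x y) ∧
    ∃ γ : ℕ → Pt d, γ 0 = x ∧ (∀ t, latAdj d (γ t) (γ (t + 1))) ∧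
      (∀ t, γ t ∉ A) ∧ ∀ r : ℝ, ∃ t, r < dist0 d (γ t) 0}

/-- `A` is connected in the nearest-neighbor graph of `ℤ^d`. -/
def LatConnected (d : ℕ) (A : Finset (Pt d)) : Prop :=
  ∀ x ∈ A, ∀ y ∈ A, ∃ (L : ℕ) (γ : ℕ → Pt d), γ 0 = x ∧ γ L = y ∧
    (∀ t < L, latAdj d (γ t) (γ (t + 1))) ∧ ∀ t ≤ L, γ t ∈ A

/-- Strict lexicographic order on `ℤ^d`. -/
def lexLt (d : ℕ) (x y : Pt d) : Prop :=
  ∃ i : Fin d, (∀ j, j < i → x j = y j) ∧ x i < y i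

/-- `x` is the lex (least) element of `A`. -/
def IsLex (d : ℕ) (A : Finset (Pt d)) (x : Pt d) : Prop :=
  x ∈ A ∧ ∀ y ∈ A, y ≠ x → lexLt d x y

/-!
Let `q` be the probability that the walk returns to its starting point. A walk from `x` that escapes
`{x}` but not `A` must hit another point of `A`, so by a union bound `esc_A(x)` is at least
`(1 - q) - ∑_{y ∈ A \ {x}} P_x(hit y)`. A point far from `x` is hit with small probability, while
each of the at most two other points of a cluster of size `≤ 3` is hit with probability at most `b`,
so `esc_A(x) ≥ 1 - q - 2 b - ε`. As `cap_A ≤ n (1 - q)`, the bound `1 / (2n)` follows once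
`4 b + q + 2 ε ≤ 1`, for instance when `b, q < 1 / 5` and `ε` is small.

All hitting probabilities are bounded at once by comparing them with an explicit function that is
superharmonic off the origin in every dimension `d ≥ 5`, has value `1` at the origin and less than
`1 / 5` at its neighbours, and decays at infinity.
-/

/-! ### Path counting -/

lemma single_units_injective {ι : Type*} [DecidableEq ι] :
    Function.Injective fun p : ι × ℤˣ => (Pi.single p.1 (p.2 : ℤ) : ι → ℤ) := by
  intro ⟨i, u⟩ ⟨j, v⟩ h
  dsimp only at h
  have hij : i = j := by
    by_contra hne
    simpa [hne] using congrFun h i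
  subst hij
  rw [Units.ext (Pi.single_injective i h)]

/-- The set `Dir d` of unit steps as a finset, the step `±eᵢ` being indexed by `(i, ±1)`. -/
def unitSteps (d : ℕ) : Finset (Pt d) :=
  Finset.univ.map ⟨_, single_units_injective (ι := Fin d)⟩

lemma mem_unitSteps {d : ℕ} {e : Pt d} : e ∈ unitSteps d ↔ e ∈ Dir d := by
  simp only [unitSteps, Dir, Finset.mem_map, Finset.mem_univ, true_and, Prod.exists,
    Function.Embedding.coeFn_mk, Set.mem_ofPred_eq, eq_comm (b := e)]
  refine exists_congr fun i => ⟨?_, ?_⟩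
  · rintro ⟨u, rfl⟩
    rcases Int.units_eq_one_or u with rfl | rfl <;> simp
  · rintro (rfl | rfl)
    · exact ⟨1, by simp⟩
    · exact ⟨-1, by simp⟩

lemma sum_unitSteps {d : ℕ} {M : Type*} [AddCommMonoid M] (f : Pt d → M) :
    ∑ e ∈ unitSteps d, f e = ∑ i, (f (Pi.single i 1) + f (Pi.single i (-1))) := by
  simp only [unitSteps, Finset.sum_map, Function.Embedding.coeFn_mk, Fintype.sum_prod_type]
  simp

lemma card_unitSteps (d : ℕ) : (unitSteps d).card = 2 * d := by
  simp [unitSteps, mul_comm]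

/-- The law of the first `T` steps of the walk. Realising `prob` as a measure makes the
measure-theoretic union bounds available. -/
noncomputable def stepLaw (d T : ℕ) : Measure (Fin T → Pt d) :=
  ProbabilityTheory.uniformOn (Fintype.piFinset fun _ => unitSteps d : Finset (Fin T → Pt d))

instance (d T : ℕ) : IsFiniteMeasure (stepLaw d T) := by
  unfold stepLaw ProbabilityTheory.uniformOn
  infer_instance

lemma isProbabilityMeasure_stepLaw {d : ℕ} (hd : 0 < d) (T : ℕ) :
    IsProbabilityMeasure (stepLaw d T) := by
  refine ProbabilityTheory.isProbabilityMeasure_uniformOn (Finset.finite_toSet _) ?_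
  have : (unitSteps d).Nonempty := by simp [← Finset.card_pos, card_unitSteps, hd]
  exact_mod_cast Fintype.piFinset_nonempty.2 fun _ => this

section Counting

variable (d T : ℕ)

open Classical in
lemma prob_eq_card_div (P : (Fin T → Pt d) → Prop) :
    prob d T P = (((Fintype.piFinset fun _ => unitSteps d).filter P).card : ℝ)
      / ((2 * d : ℕ) : ℝ) ^ T := by
  unfold prob
  congr 2
  exact Nat.subtype_card _ fun s => by simp [Fintype.mem_piFinset, mem_unitSteps]

lemma prob_eq_stepLaw_real (P : (Fin T → Pt d) → Prop) :
    prob d T P = (stepLaw d T).real {s | P s} := by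
  classical
  have hfilter :
      ((Fintype.piFinset fun _ => unitSteps d : Finset (Fin T → Pt d)) : Set _) ∩ {s | P s}
        = ((Fintype.piFinset fun _ => unitSteps d).filter P : Finset (Fin T → Pt d)) := by
    ext; simp
  rw [prob_eq_card_div, Measure.real, stepLaw,
    ← ProbabilityTheory.uniformOn_inter_self (Finset.finite_toSet _), hfilter,
    ProbabilityTheory.uniformOn_apply_finset, Finset.inter_eq_right.2 (Finset.filter_subset _ _)]
  simp [Fintype.card_piFinset, card_unitSteps]

lemma prob_nonneg (P : (Fin T → Pt d) → Prop) : 0 ≤ prob d T P :=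
  prob_eq_stepLaw_real d T P ▸ measureReal_nonneg

variable {d T} in
lemma prob_mono {P Q : (Fin T → Pt d) → Prop} (h : ∀ s, P s → Q s) :
    prob d T P ≤ prob d T Q := by
  simp only [prob_eq_stepLaw_real]
  exact measureReal_mono h

lemma prob_le_one (P : (Fin T → Pt d) → Prop) : prob d T P ≤ 1 := by
  rw [prob_eq_stepLaw_real, stepLaw, ProbabilityTheory.uniformOn]
  exact measureReal_le_one

variable {d} in
lemma prob_not (hd : 0 < d) (P : (Fin T → Pt d) → Prop) :
    prob d T (fun s => ¬ P s) = 1 - prob d T P := by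
  have := isProbabilityMeasure_stepLaw hd T
  simp only [prob_eq_stepLaw_real]
  exact probReal_compl_eq_one_sub .of_discrete

lemma prob_exists_mem_le {ι : Type*} (S : Finset ι) (P : ι → (Fin T → Pt d) → Prop) :
    prob d T (fun s => ∃ y ∈ S, P y s) ≤ ∑ y ∈ S, prob d T (P y) := by
  simp only [prob_eq_stepLaw_real]
  convert measureReal_biUnion_finset_le S (fun y => {s | P y s})
  ext; simp

lemma prob_succ (P : (Fin (T + 1) → Pt d) → Prop) :
    prob d (T + 1) P
      = (∑ e ∈ unitSteps d, prob d T fun s => P (Fin.cons e s)) / ((2 * d : ℕ) : ℝ) := by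
  classical
  simp_rw [prob_eq_card_div]
  rw [← Finset.sum_div, div_div, ← pow_succ, ← Nat.cast_sum, ← Finset.card_sigma]
  congr 2
  refine Finset.card_nbij' (fun s => ⟨s 0, Fin.tail s⟩) (fun p => Fin.cons p.1 p.2) ?_ ?_ ?_ ?_
  · intro s
    simp +contextual [Fin.tail]
  · rintro ⟨e, s⟩
    simp +contextual [Fin.forall_fin_succ]
  · intro s _
    simp
  · intro s _
    simp

end Counting

/-! ### Hitting and return probabilities -/

lemma wpos_zero {d : ℕ} (x : Pt d) {T : ℕ} (s : Fin T → Pt d) : wpos d x s 0 = x := by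
  simp [wpos]

lemma wpos_cons_succ {d : ℕ} (x e : Pt d) {T : ℕ} (s : Fin T → Pt d) (t : ℕ) :
    wpos d x (Fin.cons e s : Fin (T + 1) → Pt d) (t + 1) = wpos d (x + e) s t := by
  simp [wpos, Finset.sum_filter, Fin.sum_univ_succ, add_assoc]

lemma wpos_eq_add {d : ℕ} (x : Pt d) {T : ℕ} (s : Fin T → Pt d) (t : ℕ) :
    wpos d x s t = x + wpos d 0 s t := by
  simp [wpos]

/-- `P_x(S_t ∈ A for some 0 ≤ t ≤ T)`. -/
noncomputable def hitProb (d : ℕ) (A : Set (Pt d)) (x : Pt d) (T : ℕ) : ℝ :=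
  prob d T fun s => ∃ t ≤ T, wpos d x s t ∈ A

/-- `P_x(τ_A ≤ T)`; unlike in `hitProb`, time `0` does not count. -/
noncomputable def returnProb (d : ℕ) (A : Set (Pt d)) (x : Pt d) (T : ℕ) : ℝ :=
  prob d T fun s => ∃ t, 1 ≤ t ∧ t ≤ T ∧ wpos d x s t ∈ A

section HittingProbabilities

variable {d : ℕ} {A : Set (Pt d)} {x : Pt d}

lemma returnProb_le_hitProb (T : ℕ) : returnProb d A x T ≤ hitProb d A x T :=
  prob_mono fun _ ⟨t, _, ht, hA⟩ => ⟨t, ht, hA⟩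

lemma returnProb_zero : returnProb d A x 0 = 0 := by
  simp [returnProb, prob_eq_stepLaw_real]

lemma returnProb_succ (T : ℕ) :
    returnProb d A x (T + 1)
      = (∑ e ∈ unitSteps d, hitProb d A (x + e) T) / ((2 * d : ℕ) : ℝ) := by
  have shift (e : Pt d) (s : Fin T → Pt d) :
      (∃ t, 1 ≤ t ∧ t ≤ T + 1 ∧ wpos d x (Fin.cons e s : Fin (T + 1) → Pt d) t ∈ A)
        ↔ ∃ t ≤ T, wpos d (x + e) s t ∈ A := by
    constructor
    · rintro ⟨_ | t, h1, ht, hA⟩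
      · omega
      · exact ⟨t, by omega, wpos_cons_succ x e s t ▸ hA⟩
    · rintro ⟨t, ht, hA⟩
      exact ⟨t + 1, by omega, by omega, (wpos_cons_succ x e s t).symm ▸ hA⟩
  simp only [returnProb, hitProb, prob_succ, shift]

lemma hitProb_eq_returnProb (hx : x ∉ A) (T : ℕ) : hitProb d A x T = returnProb d A x T := by
  refine le_antisymm (prob_mono fun s ⟨t, ht, hA⟩ => ⟨t, ?_, ht, hA⟩) (returnProb_le_hitProb T)
  exact Nat.one_le_iff_ne_zero.2 fun h0 => hx (by rwa [h0, wpos_zero] at hA)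

lemma hitProb_le_of_superharmonic {f : Pt d → ℝ} (hf : ∀ z, 0 ≤ f z) (hA : ∀ z ∈ A, 1 ≤ f z)
    (hsuper : ∀ z ∉ A, ∑ e ∈ unitSteps d, f (z + e) ≤ 2 * d * f z) (x : Pt d) (T : ℕ) :
    hitProb d A x T ≤ f x := by
  induction T generalizing x with
  | zero =>
    by_cases hx : x ∈ A
    · exact (prob_le_one _ _ _).trans (hA x hx)
    · rw [hitProb_eq_returnProb hx, returnProb_zero]
      exact hf x
  | succ T ih =>
    by_cases hx : x ∈ A
    · exact (prob_le_one _ _ _).trans (hA x hx)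
    · rw [hitProb_eq_returnProb hx, returnProb_succ]
      refine div_le_of_le_mul₀ (by positivity) (hf x) ?_
      calc ∑ e ∈ unitSteps d, hitProb d A (x + e) T
          ≤ ∑ e ∈ unitSteps d, f (x + e) := Finset.sum_le_sum fun e _ => ih (x + e)
        _ ≤ f x * ((2 * d : ℕ) : ℝ) := by
            push_cast
            linarith [hsuper x hx]

lemma returnProb_coe_le_sum (A : Finset (Pt d)) (x : Pt d) (T : ℕ) :
    returnProb d A x T ≤ ∑ y ∈ A, returnProb d {y} x T :=
  (prob_mono fun _ ⟨t, h1, hT, hA⟩ => ⟨_, hA, t, h1, hT, rfl⟩).trans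
    (prob_exists_mem_le d T A _)

lemma returnProb_singleton_self (x : Pt d) (T : ℕ) :
    returnProb d {x} x T = returnProb d {0} 0 T := by
  simp only [returnProb, Set.mem_singleton_iff, wpos_eq_add x, add_eq_left]

end HittingProbabilities

/-! ### Escape probabilities and capacity -/

section Escape

variable {d : ℕ}

lemma esc_nonneg (A : Set (Pt d)) (x : Pt d) : 0 ≤ esc d A x := by
  unfold esc
  split_ifs
  · exact Real.iInf_nonneg fun T => prob_nonneg d T _
  · exact le_rfl

lemma esc_eq_iInf_one_sub_returnProb (hd : 0 < d) {A : Set (Pt d)} {x : Pt d} (hx : x ∈ A) :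
    esc d A x = ⨅ T, (1 - returnProb d A x T) := by
  simp only [esc, if_pos hx, returnProb, ← prob_not _ hd, not_exists, not_and]

lemma esc_le_one_sub_returnProb (hd : 0 < d) {A : Set (Pt d)} {x : Pt d} (hx : x ∈ A) (T : ℕ) :
    esc d A x ≤ 1 - returnProb d A x T := by
  rw [esc_eq_iInf_one_sub_returnProb hd hx]
  refine ciInf_le ⟨0, ?_⟩ T
  rintro _ ⟨T, rfl⟩
  exact sub_nonneg.2 (prob_le_one d T _)

lemma esc_anti {A B : Set (Pt d)} (hAB : A ⊆ B) {x : Pt d} (hx : x ∈ A) :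
    esc d B x ≤ esc d A x := by
  simp only [esc, if_pos hx, if_pos (hAB hx)]
  refine ciInf_mono ⟨0, ?_⟩ fun T => prob_mono fun s h t h1 hT hA => h t h1 hT (hAB hA)
  rintro _ ⟨T, rfl⟩
  exact prob_nonneg d T _

lemma esc_singleton (hd : 0 < d) (x : Pt d) : esc d {x} x = esc d {0} 0 := by
  simp only [esc_eq_iInf_one_sub_returnProb hd (Set.mem_singleton _), returnProb_singleton_self x]

lemma esc_le_esc_origin (hd : 0 < d) {A : Set (Pt d)} {x : Pt d} (hx : x ∈ A) :
    esc d A x ≤ esc d {0} 0 :=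
  esc_singleton hd x ▸ esc_anti (Set.singleton_subset_iff.2 hx) (Set.mem_singleton x)

lemma esc_origin_sub_sum_le_esc (hd : 0 < d) {A : Finset (Pt d)} {x : Pt d} (hx : x ∈ A)
    {b : Pt d → ℝ} (hb : ∀ y ∈ A.erase x, ∀ T, returnProb d {y} x T ≤ b y) :
    esc d {0} 0 - ∑ y ∈ A.erase x, b y ≤ esc d A x := by
  rw [esc_eq_iInf_one_sub_returnProb hd hx, ← esc_singleton hd x]
  refine le_ciInf fun T => ?_
  have hunion := returnProb_coe_le_sum A x T
  rw [← Finset.add_sum_erase A _ hx] at hunion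
  have herase := Finset.sum_le_sum fun y hy => hb y hy T
  linarith [esc_le_one_sub_returnProb hd (Set.mem_singleton x) T]

lemma capa_coe (A : Finset (Pt d)) : capa d A = ∑ x ∈ A, esc d A x :=
  Finset.tsum_subtype A fun x => esc d A x

lemma capa_coe_nonneg (A : Finset (Pt d)) : 0 ≤ capa d A :=
  capa_coe A ▸ Finset.sum_nonneg fun x _ => esc_nonneg _ x

lemma esc_le_capa_coe {A : Finset (Pt d)} {x : Pt d} (hx : x ∈ A) : esc d A x ≤ capa d A :=
  capa_coe A ▸ Finset.single_le_sum (f := fun x => esc d A x) (fun y _ => esc_nonneg _ y) hx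

lemma capa_coe_le (hd : 0 < d) (A : Finset (Pt d)) : capa d A ≤ A.card * esc d {0} 0 := by
  rw [capa_coe, ← nsmul_eq_mul]
  exact Finset.sum_le_card_nsmul A _ _ fun x hx => esc_le_esc_origin hd hx

end Escape

/-! ### A superharmonic barrier -/

/-- The squared Euclidean norm of a lattice point. -/
def sqNorm {d : ℕ} (x : Pt d) : ℤ := x ⬝ᵥ x

/-- Radial profile, as a function of the squared norm `m`, of a superharmonic function on `ℤ^d`,
`d ≥ 5`, equal to `1` at the origin. The values at `m = 1, 2` and the factor `23 / 50` of the tail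
are tuned numerically to bring the value at `m = 1` below `1 / 5`. -/
noncomputable def barrier (m : ℤ) : ℝ :=
  if m = 0 then 1 else if m = 1 then 39 / 200 else if m = 2 then 27 / 250
  else 23 / 50 / (m + 2)

section Barrier

variable {m N k : ℤ}

lemma barrier_zero : barrier 0 = 1 := if_pos rfl

lemma barrier_one : barrier 1 = 39 / 200 := by norm_num [barrier]

lemma barrier_of_three_le (hm : 3 ≤ m) : barrier m = 23 / 50 / (m + 2) := by
  rw [barrier, if_neg (by omega), if_neg (by omega), if_neg (by omega)]

lemma barrier_le_of_two_le (hm : 2 ≤ m) : barrier m ≤ 23 / 50 / (m + 2) := by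
  obtain rfl | hm := hm.eq_or_lt
  · norm_num [barrier]
  · exact (barrier_of_three_le hm).le

lemma barrier_nonneg (hm : 0 ≤ m) : 0 ≤ barrier m := by
  unfold barrier
  split_ifs <;> positivity

lemma barrier_add_one_le (hN : 0 ≤ N) : barrier (N + 1) ≤ barrier N := by
  obtain hN3 | hN3 := lt_or_ge N 3
  · interval_cases N <;> norm_num [barrier]
  · rw [barrier_of_three_le hN3, barrier_of_three_le (by omega)]
    push_cast
    gcongr
    linarith

lemma barrier_le_barrier_one (hm : 1 ≤ m) : barrier m ≤ barrier 1 := by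
  obtain rfl | hm2 := hm.eq_or_lt
  · rfl
  · have hmR : (2 : ℝ) ≤ m := by exact_mod_cast hm2
    calc barrier m ≤ 23 / 50 / (m + 2) := barrier_le_of_two_le hm2
      _ ≤ 23 / 50 / (2 + 2) := by gcongr
      _ ≤ barrier 1 := by norm_num [barrier_one]

lemma one_div_add_one_div_le {n k : ℝ} (hn : 5 ≤ n) (hk : k ^ 2 ≤ n) :
    1 / (n + 3 + 2 * k) + 1 / (n + 3 - 2 * k)
      ≤ 2 / (n + 3) + 10 * (1 / (n + 2) - 1 / (n + 3)) * k ^ 2 / n := by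
  have hplus : 0 < n + 3 + 2 * k := by nlinarith [sq_nonneg (k + 1)]
  have hminus : 0 < n + 3 - 2 * k := by nlinarith [sq_nonneg (k - 1)]
  have hprod : 0 < (n + 3) ^ 2 - 4 * n := by nlinarith
  calc 1 / (n + 3 + 2 * k) + 1 / (n + 3 - 2 * k)
      = 2 / (n + 3) + 8 * k ^ 2 / ((n + 3) * ((n + 3) ^ 2 - 4 * k ^ 2)) := by
        rw [show (n + 3) ^ 2 - 4 * k ^ 2 = (n + 3 + 2 * k) * (n + 3 - 2 * k) by ring]
        field_simp
        ring
    _ ≤ 2 / (n + 3) + 8 * k ^ 2 / ((n + 3) * ((n + 3) ^ 2 - 4 * n)) := by gcongr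
    _ ≤ 2 / (n + 3) + 10 * k ^ 2 / (n * ((n + 2) * (n + 3))) := by
        gcongr 2 / (n + 3) + ?_
        rw [div_le_div_iff₀ (by positivity) (by positivity)]
        have : 8 * (n * (n + 2)) ≤ 10 * ((n + 3) ^ 2 - 4 * n) := by nlinarith
        nlinarith [mul_le_mul_of_nonneg_left this (show 0 ≤ k ^ 2 * (n + 3) by positivity)]
    _ = 2 / (n + 3) + 10 * (1 / (n + 2) - 1 / (n + 3)) * k ^ 2 / n := by
        field_simp
        ring

-- Taking `k = x i` and `N = ∑ i, x i ^ 2` makes the last terms add up to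
-- `10 * (barrier N - barrier (N + 1))`, hence the condition `10 ≤ 2 * d`.
lemma barrier_add_barrier_le (hN : 1 ≤ N) (hk : k ^ 2 ≤ N) :
    barrier (N + 1 + 2 * k) + barrier (N + 1 - 2 * k)
      ≤ 2 * barrier (N + 1) + 10 * (barrier N - barrier (N + 1)) * k ^ 2 / N := by
  obtain hN5 | hN5 := lt_or_ge N 5
  · have hk_le : k ≤ 2 := by nlinarith
    have hk_ge : -2 ≤ k := by nlinarith
    interval_cases N <;> interval_cases k <;> first | omega | norm_num [barrier]
  · have hplus : 2 ≤ N + 1 + 2 * k := by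
      obtain h | h := le_or_gt (-2) k <;> nlinarith
    have hminus : 2 ≤ N + 1 - 2 * k := by
      obtain h | h := le_or_gt k 2 <;> nlinarith
    have hreal := one_div_add_one_div_le (n := N) (k := k) (by exact_mod_cast hN5)
      (by exact_mod_cast hk)
    have hb₁ := barrier_le_of_two_le hplus
    have hb₂ := barrier_le_of_two_le hminus
    rw [barrier_of_three_le (m := N) (by omega), barrier_of_three_le (m := N + 1) (by omega)]
    push_cast at hb₁ hb₂ ⊢
    calc barrier (N + 1 + 2 * k) + barrier (N + 1 - 2 * k)
        ≤ 23 / 50 / (N + 1 + 2 * k + 2) + 23 / 50 / (N + 1 - 2 * k + 2) := add_le_add hb₁ hb₂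
      _ = 23 / 50 * (1 / (N + 3 + 2 * k) + 1 / (N + 3 - 2 * k)) := by ring
      _ ≤ 23 / 50 * (2 / (N + 3) + 10 * (1 / (N + 2) - 1 / (N + 3)) * k ^ 2 / N) := by gcongr
      _ = _ := by ring

end Barrier

section BarrierBounds

variable {d : ℕ}

lemma sqNorm_zero : sqNorm (0 : Pt d) = 0 := dotProduct_zero _

lemma sqNorm_nonneg (x : Pt d) : 0 ≤ sqNorm x := by
  unfold sqNorm dotProduct
  exact Finset.sum_nonneg fun i _ => mul_self_nonneg (x i)

lemma sqNorm_pos {x : Pt d} (hx : x ≠ 0) : 0 < sqNorm x :=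
  (sqNorm_nonneg x).lt_of_ne' (dotProduct_self_eq_zero.not.2 hx)

lemma sq_le_sqNorm (x : Pt d) (i : Fin d) : x i ^ 2 ≤ sqNorm x :=
  sq (x i) ▸ Finset.single_le_sum (f := fun i => x i * x i) (fun i _ => mul_self_nonneg (x i))
    (Finset.mem_univ i)

lemma sqNorm_add_single (x : Pt d) (i : Fin d) (c : ℤ) :
    sqNorm (x + Pi.single i c) = sqNorm x + 2 * c * x i + c ^ 2 := by
  simp only [sqNorm, add_dotProduct, dotProduct_add, single_dotProduct, dotProduct_single,
    Pi.add_apply, Pi.single_eq_same]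
  ring

lemma sqNorm_of_mem_unitSteps {e : Pt d} (he : e ∈ unitSteps d) : sqNorm e = 1 := by
  obtain ⟨i, rfl | rfl⟩ := mem_unitSteps.1 he <;> simp [sqNorm]

lemma sum_barrier_sqNorm_add_le (hd : 5 ≤ d) {x : Pt d} (hx : x ≠ 0) :
    ∑ e ∈ unitSteps d, barrier (sqNorm (x + e)) ≤ 2 * d * barrier (sqNorm x) := by
  have hN : 0 < sqNorm x := sqNorm_pos hx
  set N := sqNorm x with hNdef
  have hsumsq : ∑ i, (x i : ℝ) ^ 2 = N := by simp [hNdef, sqNorm, dotProduct, sq]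
  have hdR : (5 : ℝ) ≤ d := by exact_mod_cast hd
  calc ∑ e ∈ unitSteps d, barrier (sqNorm (x + e))
      = ∑ i, (barrier (N + 1 + 2 * x i) + barrier (N + 1 - 2 * x i)) := by
        rw [sum_unitSteps]
        refine Finset.sum_congr rfl fun i _ => ?_
        rw [sqNorm_add_single, sqNorm_add_single]
        congr 2 <;> ring
    _ ≤ ∑ i, (2 * barrier (N + 1) + 10 * (barrier N - barrier (N + 1)) * x i ^ 2 / N) :=
        Finset.sum_le_sum fun i _ => barrier_add_barrier_le hN (sq_le_sqNorm x i)
    _ = 2 * d * barrier (N + 1) + 10 * (barrier N - barrier (N + 1)) := by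
        simp only [Finset.sum_add_distrib, ← Finset.sum_div, ← Finset.mul_sum, hsumsq,
          Finset.sum_const, Finset.card_univ, Fintype.card_fin, nsmul_eq_mul]
        rw [mul_div_cancel_right₀ _ (by exact_mod_cast hN.ne')]
        ring
    _ ≤ 2 * d * barrier N := by
        nlinarith [barrier_add_one_le hN.le]

lemma hitProb_singleton_le_barrier (hd : 5 ≤ d) (x y : Pt d) (T : ℕ) :
    hitProb d {y} x T ≤ barrier (sqNorm (x - y)) := by
  refine hitProb_le_of_superharmonic (f := fun z => barrier (sqNorm (z - y)))
    (fun z => barrier_nonneg (sqNorm_nonneg _)) ?_ (fun z hz => ?_) x T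
  · rintro _ rfl
    simp [sqNorm_zero, barrier_zero]
  · simpa only [add_sub_right_comm] using sum_barrier_sqNorm_add_le hd (sub_ne_zero.2 hz)

lemma returnProb_origin_le (hd : 5 ≤ d) (T : ℕ) : returnProb d {0} 0 T ≤ barrier 1 := by
  cases T with
  | zero => exact returnProb_zero.trans_le (barrier_nonneg zero_le_one)
  | succ T =>
    rw [returnProb_succ]
    refine div_le_of_le_mul₀ (by positivity) (barrier_nonneg zero_le_one) ?_
    calc ∑ e ∈ unitSteps d, hitProb d {0} (0 + e) T
        ≤ ∑ _e ∈ unitSteps d, barrier 1 := Finset.sum_le_sum fun e he => by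
          simpa [sqNorm_of_mem_unitSteps he] using hitProb_singleton_le_barrier hd (0 + e) 0 T
      _ = barrier 1 * ((2 * d : ℕ) : ℝ) := by
          rw [Finset.sum_const, card_unitSteps, nsmul_eq_mul, mul_comm]

lemma one_sub_barrier_one_le_esc_origin (hd : 5 ≤ d) : 1 - barrier 1 ≤ esc d {0} 0 := by
  rw [esc_eq_iInf_one_sub_returnProb (by omega) (Set.mem_singleton _)]
  exact le_ciInf fun T => sub_le_sub_left (returnProb_origin_le hd T) 1

lemma esc_origin_pos (hd : 5 ≤ d) : 0 < esc d {0} 0 := by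
  linarith [one_sub_barrier_one_le_esc_origin hd, barrier_one]

end BarrierBounds

/-! ### Harmonic measure -/

section HarmonicMeasure

variable {d : ℕ}

lemma half_esc_origin_le_esc (hd : 5 ≤ d) {A B : Finset (Pt d)} (hBA : B ⊆ A) (hB : B.card ≤ 3)
    {x : Pt d} (hx : x ∈ B)
    (hfar : ∀ y ∈ A \ B, barrier (sqNorm (x - y)) ≤ 1 / (80 * A.card)) :
    esc d {0} 0 / 2 ≤ esc d A x := by
  have hunion := esc_origin_sub_sum_le_esc (by omega) (hBA hx)
    (b := fun y => barrier (sqNorm (x - y))) fun y _ T =>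
      (returnProb_le_hitProb T).trans (hitProb_singleton_le_barrier hd x y T)
  have hsplit : A.erase x = B.erase x ∪ A \ B := by
    grind
  have hdisj : Disjoint (B.erase x) (A \ B) :=
    Finset.disjoint_sdiff.mono_left (Finset.erase_subset x B)
  have hnear : ∑ y ∈ B.erase x, barrier (sqNorm (x - y)) ≤ 2 * barrier 1 := by
    calc ∑ y ∈ B.erase x, barrier (sqNorm (x - y))
        ≤ (B.erase x).card • barrier 1 := Finset.sum_le_card_nsmul _ _ _ fun y hy =>
          barrier_le_barrier_one (sqNorm_pos (sub_ne_zero.2 (Finset.ne_of_mem_erase hy).symm))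
      _ ≤ 2 • barrier 1 := by
          gcongr
          · exact barrier_nonneg zero_le_one
          · rw [Finset.card_erase_of_mem hx]
            omega
      _ = 2 * barrier 1 := by simp
  have hfar_sum : ∑ y ∈ A \ B, barrier (sqNorm (x - y)) ≤ 1 / 80 := by
    have hA : (0 : ℝ) < A.card := by exact_mod_cast Finset.card_pos.2 ⟨x, hBA hx⟩
    calc ∑ y ∈ A \ B, barrier (sqNorm (x - y))
        ≤ (A \ B).card • (1 / (80 * (A.card : ℝ))) := Finset.sum_le_card_nsmul _ _ _ hfar
      _ ≤ A.card • (1 / (80 * (A.card : ℝ))) := by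
          gcongr
          exact Finset.sdiff_subset
      _ = 1 / 80 := by
          rw [nsmul_eq_mul]
          field_simp
  rw [hsplit, Finset.sum_union hdisj] at hunion
  linarith [one_sub_barrier_one_le_esc_origin hd, barrier_one]

lemma one_div_two_mul_le_div {n e c p : ℝ} (hp : 0 < p) (he : p / 2 ≤ e) (hec : e ≤ c)
    (hc : c ≤ n * p) : 1 / (2 * n) ≤ e / c := by
  have hc0 : 0 < c := by linarith
  have hn : 0 < n := pos_of_mul_pos_left (hc0.trans_le hc) hp.le
  rw [div_le_div_iff₀ (by positivity) hc0]
  nlinarith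

lemma one_div_two_mul_card_le_harm (hd : 5 ≤ d) {A B : Finset (Pt d)} (hBA : B ⊆ A)
    (hB : B.card ≤ 3) {x : Pt d} (hx : x ∈ B)
    (hfar : ∀ y ∈ A \ B, barrier (sqNorm (x - y)) ≤ 1 / (80 * A.card)) :
    1 / (2 * (A.card : ℝ)) ≤ harm d A x :=
  one_div_two_mul_le_div (esc_origin_pos hd) (half_esc_origin_le_esc hd hBA hB hx hfar)
    (esc_le_capa_coe (hBA hx)) (capa_coe_le (by omega) A)

lemma one_div_two_mul_sum_card_le_harmS (hd : 5 ≤ d) (C : ClusteringS d) {i : Fin C.1}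
    (hi : (C.2 i).card ≤ 3) {x : Pt d} (hx : x ∈ C.2 i) :
    1 / (2 * ((∑ j, (C.2 j).card : ℕ) : ℝ)) ≤ harmS d C i x := by
  refine one_div_two_mul_le_div (esc_origin_pos hd)
    (half_esc_origin_le_esc hd subset_rfl hi hx (by simp)) ?_ ?_
  · exact (esc_le_capa_coe hx).trans
      (Finset.single_le_sum (f := fun j => capa d (C.2 j)) (fun j _ => capa_coe_nonneg _)
        (Finset.mem_univ i))
  · rw [Nat.cast_sum, Finset.sum_mul]
    exact Finset.sum_le_sum fun j _ => capa_coe_le (by omega) (C.2 j)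

end HarmonicMeasure

/-! ### Separation -/

section Separation

variable {d k : ℕ}

lemma sep_le_dist0 {C : Fin k → Finset (Pt d)} {i : Fin k} {x y : Pt d} (hx : x ∈ C i)
    (hy : y ∈ others d C i) : sep d C ≤ dist0 d x y := by
  refine (ciInf_le (Set.finite_range _).bddBelow i).trans (csInf_le ⟨0, ?_⟩ ⟨x, hx, y, hy, rfl⟩)
  rintro _ ⟨_, _, _, _, rfl⟩
  exact Real.sqrt_nonneg _

lemma dist0_eq_sqrt_sqNorm (x y : Pt d) : dist0 d x y = √(sqNorm (x - y)) := by
  simp [dist0, sqNorm, dotProduct, sq]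

lemma barrier_le_of_le_sep {C : Fin k → Finset (Pt d)} {i : Fin k} {x y : Pt d} (hx : x ∈ C i)
    (hy : y ∈ others d C i) {n : ℕ} (hn : 0 < n) (hsep : √(40 * n) ≤ sep d C) :
    barrier (sqNorm (x - y)) ≤ 1 / (80 * n) := by
  have hdist := hsep.trans (sep_le_dist0 hx hy)
  rw [dist0_eq_sqrt_sqNorm,
    Real.sqrt_le_sqrt_iff (by exact_mod_cast sqNorm_nonneg (x - y))] at hdist
  have hnorm : 40 * (n : ℤ) ≤ sqNorm (x - y) := by exact_mod_cast hdist
  have hnR : (0 : ℝ) < n := by exact_mod_cast hn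
  calc barrier (sqNorm (x - y)) ≤ 23 / 50 / (sqNorm (x - y) + 2) :=
        barrier_le_of_two_le (by omega)
    _ ≤ 1 / (80 * n) := by
        rw [div_le_div_iff₀ (by linarith) (by positivity)]
        linarith

lemma IsClusteringOf.subset {C : Fin k → Finset (Pt d)} {U : Finset (Pt d)}
    (hC : IsClusteringOf d C U) (i : Fin k) : C i ⊆ U :=
  hC.2.2 ▸ Finset.subset_biUnion_of_mem C (Finset.mem_univ i)

lemma IsClusteringOf.sdiff_subset_others {C : Fin k → Finset (Pt d)} {U : Finset (Pt d)}
    (hC : IsClusteringOf d C U) (i : Fin k) : U \ C i ⊆ others d C i := by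
  intro y hy
  obtain ⟨hyU, hyi⟩ := Finset.mem_sdiff.1 hy
  obtain ⟨j, -, hyj⟩ := Finset.mem_biUnion.1 (hC.2.2.symm ▸ hyU)
  have hji : j ≠ i := fun h => hyi (h ▸ hyj)
  exact Finset.mem_biUnion.2 ⟨j, Finset.mem_univ j, by rwa [if_neg hji]⟩

lemma IsClusteringOf.sum_card {C : Fin k → Finset (Pt d)} {U : Finset (Pt d)}
    (hC : IsClusteringOf d C U) : ∑ i, (C i).card = U.card := by
  rw [← hC.2.2, Finset.card_biUnion fun i _ j _ hij => hC.2.1 i j hij]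

end Separation

theorem min_hm_general (n : ℕ) :
    ∃ a : ℝ, ∀ d : ℕ, 5 ≤ d → ∀ U : Conf d, U.card = n →
      ∀ C : ClusteringS d, IsClusteringOf d C.2 U → ∀ i : Fin C.1, (C.2 i).card ≤ 3 →
        (a ≤ sep d C.2 → ∀ x ∈ C.2 i, 1 / (2 * (n : ℝ)) ≤ harm d (↑U) x) ∧
          (∀ x ∈ C.2 i, 1 / (2 * (n : ℝ)) ≤ harmS d C i x) := by
  refine ⟨√(40 * n), fun d hd U hU C hC i hi => ⟨fun hsep x hx => ?_, fun x hx => ?_⟩⟩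
  · have hn : 0 < n := hU ▸ Finset.card_pos.2 ⟨x, hC.subset i hx⟩
    subst hU
    exact one_div_two_mul_card_le_harm hd (hC.subset i) hi hx fun y hy =>
      barrier_le_of_le_sep hx (hC.sdiff_subset_others i hy) hn hsep
  · rw [← hU, ← hC.sum_card]
    exact one_div_two_mul_sum_card_le_harmS hd C hi hx

/-- **Harmonic measure lower bound.** Let `d ≥ 5` and let `U` be an `n`-element
configuration in `ℤ^d`. There is `a = a(d,n)` such that if `C = (C¹, C²)` is a clustering
of `U` with `|C¹| ≤ 3` and `sep(C) ≥ a`, then `H_U(x) ≥ 1/(2n)` for `x ∈ C¹`; moreover,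
regardless of the separation, `H_C(1,x) ≥ 1/(2n)` for `x ∈ C¹`. -/
theorem min_hm (d n : ℕ) (hd : 5 ≤ d) :
    ∃ a : ℝ, ∀ U : Conf d, U.card = n →
      ∀ C1 C2 : Finset (Pt d),
        IsClusteringOf d ![C1, C2] U → C1.card ≤ 3 →
          (a ≤ sep d ![C1, C2] → ∀ x ∈ C1, 1 / (2 * (n : ℝ)) ≤ harm d (↑U) x) ∧
          (∀ x ∈ C1, 1 / (2 * (n : ℝ)) ≤
            harmS d ⟨2, ![C1, C2]⟩ ⟨0, Nat.zero_lt_two⟩ x) := by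
  obtain ⟨a, ha⟩ := min_hm_general n
  exact ⟨a, fun U hU C1 C2 hC hC1 => ha d hd U hU ⟨2, ![C1, C2]⟩ hC 0 hC1⟩

end HATFormal
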